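/- Let n be a positive prime. Then Ramanujan's tau function satisfies τ(n) = 1 + n^{11} + (691/756)·(n^5 − n^{11}) − (691/6)·Σ_{i=0}^{n−1} J_n(i), where for each i, J_n(i) = (1/2)·Σ sgn(i/n + b/a)·(ai+bn)^5·(ci+dn)^5, the inner sum ranging over all (a,b,c,d) ∈ ℤ⁴ with ad−bc=1, a≠0, c≠0, |a| ≤ 2n, |b| ≤ 2n, |c| ≤ 2n, |d| ≤ 2n, and (i/n+b/a)(i/n+d/c) < 0 (the factor 1/2 accounts for the quotient of SL(2,ℤ) by ±1, the summand being invariant under negating (a,b,c,d)). -/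

import Mathlib

/-!
For `(a b; c d)` in `SL(2,ℤ)` and `0 ≤ i < n`, the product `(a b; c d) * (1 i; 0 n) = (a x; c y)`
has determinant `a * y - c * x = n`, and the sign condition in `J_n(i)` says `a * y > 0 > c * x`.
Then `|a| < n`, so for prime `n` the entry `a` is invertible modulo `n`; as `x = a * i` modulo `n`,
every integer matrix with these properties arises from exactly one `i`. The summand of `J_n(i)` is
`|x * y| ^ 5`, so with `p = a * y` and `q = -c * x` the sum over all these matrices is
`4 * ∑_{p + q = n} σ₅(p) * σ₅(q)`, the factor `4` counting the signs of `y` and `x`.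

The same convolution occurs in the coefficients of `E₆²`. Level one modular forms of weight `12`
agree once their first two coefficients do, hence `E₁₂ = E₆² + (762048 / 691) Δ`, where
`762048 / 691 = 65520 / 691 + 1008`; this expresses `τ` through `σ₁₁`, `σ₅` and the convolution.
-/

open scoped Classical
open Complex Real UpperHalfPlane

/-- The inner sum `J_n(i) = (1/2)·∑ sgn(i/n + b/a)·(ai+bn)^5·(ci+dn)^5`, over quadruples
`(a,b,c,d) ∈ ℤ⁴` with `ad−bc = 1`, `a ≠ 0`, `c ≠ 0`, `|a|,|b|,|c|,|d| ≤ 2n` and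
`(i/n+b/a)(i/n+d/c) < 0`; the factor `1/2` accounts for the quotient of `SL(2,ℤ)`
by `±1` (the summand being invariant under negating `(a,b,c,d)`). -/
noncomputable def Jn (n i : ℕ) : ℂ :=
  (1 / 2) * ∑ᶠ p : ℤ × ℤ × ℤ × ℤ,
    if p.1 * p.2.2.2 - p.2.1 * p.2.2.1 = 1 ∧ p.1 ≠ 0 ∧ p.2.2.1 ≠ 0 ∧
        |p.1| ≤ 2 * (n : ℤ) ∧ |p.2.1| ≤ 2 * (n : ℤ) ∧
        |p.2.2.1| ≤ 2 * (n : ℤ) ∧ |p.2.2.2| ≤ 2 * (n : ℤ) ∧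
        ((i : ℚ) / n + p.2.1 / p.1) * ((i : ℚ) / n + p.2.2.2 / p.2.2.1) < 0 then
      (Real.sign ((i : ℝ) / n + (p.2.1 : ℝ) / p.1) : ℂ) *
        ((p.1 * i + p.2.1 * n : ℤ) : ℂ) ^ 5 * ((p.2.2.1 * i + p.2.2.2 * n : ℤ) : ℂ) ^ 5
    else 0

section ModularForms

open ModularForm EisensteinSeries MatrixGroups
open ArithmeticFunction (sigma)

/-- The generating series `∑ σ_k(m) q ^ m`. Its constant term vanishes, since `sigma k 0 = 0`. -/
noncomputable def sigmaSeries (k : ℕ) : PowerSeries ℂ :=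
  PowerSeries.mk fun m => (sigma k m : ℂ)

theorem coeff_sigmaSeries (k m : ℕ) : (sigmaSeries k).coeff m = sigma k m :=
  PowerSeries.coeff_mk m _

theorem qExpansion_E {k : ℕ} (hk : 3 ≤ k) (hk' : Even k) :
    qExpansion 1 (E hk) = 1 - (2 * k / bernoulli k : ℂ) • sigmaSeries (k - 1) := by
  ext m
  rw [E_qExpansion_coeff hk hk', map_sub, PowerSeries.coeff_smul, coeff_sigmaSeries,
    PowerSeries.coeff_one]
  split_ifs with hm <;> simp [hm]

theorem qExpansion_E₆ : qExpansion 1 E₆ = 1 - (504 : ℂ) • sigmaSeries 5 := by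
  rw [qExpansion_E _ ⟨3, rfl⟩]
  norm_num [show bernoulli 6 = 1 / 42 by decide +kernel]

/-- The Eisenstein series of weight `12`, normalized to have constant term `1`. -/
noncomputable abbrev E₁₂ : ModularForm 𝒮ℒ 12 := E (k := 12) (by norm_num)

theorem qExpansion_E₁₂ : qExpansion 1 E₁₂ = 1 + (65520 / 691 : ℂ) • sigmaSeries 11 := by
  rw [qExpansion_E _ ⟨6, rfl⟩]
  norm_num [show bernoulli 12 = -691 / 2730 by decide +kernel, sub_eq_add_neg]

theorem levelOne_ext_of_coeff {k : ℤ} {f g : ModularForm 𝒮ℒ k}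
    (h : ∀ m ≤ k.toNat / 12, (qExpansion 1 f).coeff m = (qExpansion 1 g).coeff m) : f = g := by
  rw [← sub_eq_zero]
  refine sturm_bound_levelOne ((Nat.cast_lt.mpr (Nat.lt_succ_self _)).trans_le ?_)
  refine PowerSeries.nat_le_order _ _ fun m hm => ?_
  rw [FunLike.coe_sub, ModularForm.qExpansion_sub one_pos one_mem_strictPeriods_SL, map_sub,
    h m (Nat.lt_succ_iff.mp hm), sub_self]

/-- The modular form `E₆ ^ 2 + c • Δ` of weight `12`; for a suitable `c` it is `E₁₂`. -/
noncomputable def E₆SqAddSmulDiscriminant (c : ℂ) : ModularForm 𝒮ℒ 12 :=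
  mcast rfl (E₆.pow 2) + c • (CuspForm.discriminant : ModularForm 𝒮ℒ 12)

theorem qExpansion_E₆SqAddSmulDiscriminant (c : ℂ) :
    qExpansion 1 (E₆SqAddSmulDiscriminant c) =
      (1 - (504 : ℂ) • sigmaSeries 5) ^ 2 + c • qExpansion 1 discriminant := by
  rw [← qExpansion_E₆, E₆SqAddSmulDiscriminant, FunLike.coe_add,
    ModularForm.qExpansion_add one_pos one_mem_strictPeriods_SL,
    FunLike.coe_smul, ModularForm.qExpansion_smul one_pos one_mem_strictPeriods_SL,
    coe_mcast, ModularForm.qExpansion_pow one_pos one_mem_strictPeriods_SL]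
  rfl

theorem coeff_zero_qExpansion_discriminant : (qExpansion 1 discriminant).coeff 0 = 0 :=
  CuspFormClass.qExpansion_coeff_zero CuspForm.discriminant one_pos one_mem_strictPeriods_SL

theorem E₁₂_eq_E₆SqAddSmulDiscriminant : E₁₂ = E₆SqAddSmulDiscriminant (762048 / 691) := by
  refine levelOne_ext_of_coeff fun m hm => ?_
  rw [qExpansion_E₆SqAddSmulDiscriminant, qExpansion_E₁₂, sq]
  obtain rfl | rfl : m = 0 ∨ m = 1 := Nat.le_one_iff_eq_zero_or_eq_one.mp hm
  · simp [-PowerSeries.coeff_zero_eq_constantCoeff, PowerSeries.coeff_mul,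
      coeff_zero_qExpansion_discriminant, coeff_sigmaSeries]
  · norm_num [-PowerSeries.coeff_zero_eq_constantCoeff, PowerSeries.coeff_mul,
      Finset.Nat.antidiagonal_succ, PowerSeries.coeff_one,
      discriminant_qExpansion_coeff_one, coeff_sigmaSeries]

theorem qExpansion_discriminant :
    qExpansion 1 discriminant = (65 / 756 : ℂ) • sigmaSeries 11 + (691 / 756 : ℂ) • sigmaSeries 5 -
      (691 / 3 : ℂ) • sigmaSeries 5 ^ 2 := by
  have hE : 1 + (65520 / 691 : ℂ) • sigmaSeries 11 =
      (1 - (504 : ℂ) • sigmaSeries 5) ^ 2 + (762048 / 691 : ℂ) • qExpansion 1 discriminant := by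
    rw [← qExpansion_E₁₂, ← qExpansion_E₆SqAddSmulDiscriminant, ← E₁₂_eq_E₆SqAddSmulDiscriminant]
  have hsq : (1 - (504 : ℂ) • sigmaSeries 5) ^ 2 =
      1 - (1008 : ℂ) • sigmaSeries 5 + (504 ^ 2 : ℂ) • sigmaSeries 5 ^ 2 := by
    rw [sub_sq, smul_pow, one_pow, mul_one, two_mul]
    module
  rw [hsq] at hE
  linear_combination (norm := module) (-(691 / 762048) : ℂ) • hE

theorem coeff_qExpansion_discriminant (m : ℕ) :
    (qExpansion 1 discriminant).coeff m = 65 / 756 * sigma 11 m + 691 / 756 * sigma 5 m -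
      691 / 3 * ∑ p ∈ Finset.HasAntidiagonal.antidiagonal m, (sigma 5 p.1 * sigma 5 p.2 : ℂ) := by
  simp only [qExpansion_discriminant, sq, map_add, map_sub, PowerSeries.coeff_smul,
    PowerSeries.coeff_mul, coeff_sigmaSeries, smul_eq_mul]

theorem hasSum_discriminant_of_tsum_eq {τ : ℕ → ℂ}
    (hτ : ∀ z : ℍ,
      ∑' m : ℕ, τ (m + 1) * Complex.exp (2 * π * Complex.I * (m + 1) * z)
        = Complex.exp (2 * π * Complex.I * z)
          * ∏' m : ℕ, (1 - Complex.exp (2 * π * Complex.I * (m + 1) * z)) ^ 24) (z : ℍ) :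
    HasSum (fun m : ℕ => τ (m + 1) * eta_q m z) (discriminant z) := by
  have hΔ : ∑' m : ℕ, τ (m + 1) * eta_q m z = discriminant z := by
    simpa [discriminant_eq_q_prod, eta_q_eq_cexp, Function.Periodic.qParam] using hτ z
  rw [← hΔ]
  refine (not_imp_comm.mp tsum_eq_zero_of_not_summable ?_).hasSum
  exact hΔ ▸ discriminant_ne_zero z

theorem coeff_qExpansion_discriminant_of_hasSum {τ : ℕ → ℂ}
    (h : ∀ z : ℍ, HasSum (fun m : ℕ => τ (m + 1) * eta_q m z) (discriminant z)) {n : ℕ}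
    (hn : n ≠ 0) : (qExpansion 1 discriminant).coeff n = τ n := by
  have hsum (z : ℍ) : HasSum (fun m => Function.update τ 0 0 m • Function.Periodic.qParam 1 z ^ m)
      (CuspForm.discriminant z) := by
    rw [← hasSum_nat_add_iff' 1]
    simpa [eta_q] using h z
  rw [← CuspForm.coe_discriminant, ← ModularFormClass.qExpansion_coeff_unique one_pos
    one_mem_strictPeriods_SL hsum, Function.update_of_ne hn]

end ModularForms

section StraddlingMatrices

open ArithmeticFunction (sigma)

/-- The integer matrices `(a x; c y)` of determinant `n` with `c * x < 0 < a * y`; for `0 < n` this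
sign condition says that the slopes `x / a` and `y / c` of the rows straddle `0`. A matrix is
encoded as `((a, y), (c, x))`, diagonal first, so that it is a pair of factorizations `a * y = p`
and `c * x = -q` with `p + q = n`. -/
def straddlingMatrices (n : ℕ) : Finset ((ℤ × ℤ) × ℤ × ℤ) :=
  (Finset.HasAntidiagonal.antidiagonal n).biUnion fun k =>
    (k.1 : ℤ).divisorsAntidiag ×ˢ (-k.2 : ℤ).divisorsAntidiag

theorem mem_straddlingMatrices {n : ℕ} {a y c x : ℤ} :
    ((a, y), (c, x)) ∈ straddlingMatrices n ↔ 0 < a * y ∧ c * x < 0 ∧ a * y - c * x = n := by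
  simp only [straddlingMatrices, Finset.mem_biUnion, Finset.HasAntidiagonal.mem_antidiagonal,
    Finset.mem_product, Int.mem_divisorsAntidiag, Prod.exists]
  constructor
  · rintro ⟨p, q, hpq, ⟨hay, hp⟩, hcx, hq⟩
    omega
  · rintro ⟨hay, hcx, hdet⟩
    exact ⟨(a * y).toNat, (-(c * x)).toNat, by omega⟩

theorem abs_lt_of_mem_straddlingMatrices {n : ℕ} {a y c x : ℤ}
    (hM : ((a, y), (c, x)) ∈ straddlingMatrices n) : |a| < n ∧ |y| < n ∧ |c| < n ∧ |x| < n := by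
  obtain ⟨hay, hcx, hdet⟩ := mem_straddlingMatrices.mp hM
  have abs_lt_of_dvd {r m : ℤ} (hm : 0 < m) (hmn : m < n) (hr : r ∣ m) : |r| < n :=
    (Int.le_of_dvd hm ((abs_dvd r m).mpr hr)).trans_lt hmn
  have hay' : a * y < n := by linarith
  have hcx' : -(c * x) < n := by linarith
  exact ⟨abs_lt_of_dvd hay hay' (dvd_mul_right a y), abs_lt_of_dvd hay hay' (dvd_mul_left y a),
    abs_lt_of_dvd (neg_pos.mpr hcx) hcx' (dvd_mul_right c x).neg_right,
    abs_lt_of_dvd (neg_pos.mpr hcx) hcx' (dvd_mul_left x c).neg_right⟩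

theorem sum_abs_pow_divisorsAntidiag (k : ℕ) (z : ℤ) :
    ∑ p ∈ z.divisorsAntidiag, |p.2| ^ k = 2 * sigma k z.natAbs := by
  have hsum (m : ℕ) : ∑ p ∈ m.divisorsAntidiagonal, (p.2 : ℤ) ^ k = sigma k m := by
    rw [Nat.sum_divisorsAntidiagonal' fun _ d => (d : ℤ) ^ k, ArithmeticFunction.sigma_apply]
    push_cast
    rfl
  obtain ⟨m, rfl | rfl⟩ := z.eq_nat_or_neg
  · rw [Int.divisorsAntidiag_natCast, Finset.sum_disjUnion, Finset.sum_map, Finset.sum_map]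
    simp [hsum, two_mul]
  · rw [Int.divisorsAntidiag_neg_natCast, Finset.sum_disjUnion, Finset.sum_map, Finset.sum_map]
    simp [hsum, two_mul]

theorem sum_straddlingMatrices (k n : ℕ) :
    ∑ M ∈ straddlingMatrices n, |M.2.2 * M.1.2| ^ k =
      4 * ∑ p ∈ Finset.HasAntidiagonal.antidiagonal n, (sigma k p.1 * sigma k p.2 : ℤ) := by
  rw [straddlingMatrices, Finset.sum_biUnion, Finset.mul_sum]
  · refine Finset.sum_congr rfl fun p _ => ?_
    simp only [abs_mul, mul_pow, Finset.sum_product_right]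
    rw [← Finset.sum_mul_sum, sum_abs_pow_divisorsAntidiag, sum_abs_pow_divisorsAntidiag,
      Int.natAbs_neg, Int.natAbs_natCast, Int.natAbs_natCast]
    ring
  · intro p _ q _ hpq
    refine Finset.disjoint_left.mpr fun M hp hq => hpq ?_
    simp only [Finset.mem_product, Int.mem_divisorsAntidiag] at hp hq
    ext <;> omega

theorem sign_mul_mul_pow {k : ℕ} (hk : Odd k) {r z : ℝ} (hr : 0 < r) :
    Real.sign (r * z) * z ^ k = |z| ^ k := by
  obtain hz | rfl | hz := lt_trichotomy z 0
  · rw [Real.sign_of_neg (mul_neg_of_pos_of_neg hr hz), abs_of_neg hz, hk.neg_pow, neg_one_mul]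
  · simp [hk.pos.ne']
  · rw [Real.sign_of_pos (mul_pos hr hz), abs_of_pos hz, one_mul]

theorem sign_div_add_div_mul_pow_mul_pow {k : ℕ} (hk : Odd k) {n i : ℕ} (hn : 0 < n)
    {a b c d : ℤ} (h : 0 < a * (c * i + d * n)) :
    (Real.sign ((i : ℝ) / n + (b : ℝ) / a) : ℂ) *
      ((a * i + b * n : ℤ) : ℂ) ^ k * ((c * i + d * n : ℤ) : ℂ) ^ k =
        (|(a * i + b * n) * (c * i + d * n)| ^ k : ℤ) := by
  set x := a * i + b * n with hx
  set y := c * i + d * n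
  have hay' : (0 : ℝ) < a * y := mod_cast h
  have hslope : (i : ℝ) / n + (b : ℝ) / a = (n * (a * y : ℝ))⁻¹ * (x * y) := by
    have ha := left_ne_zero_of_mul hay'.ne'
    have hy := right_ne_zero_of_mul hay'.ne'
    rw [hx]
    push_cast
    field_simp
  have hsign := sign_mul_mul_pow hk (z := x * y)
    (inv_pos.mpr (mul_pos (Nat.cast_pos.mpr hn) hay'))
  rw [← hslope, mul_pow, ← mul_assoc, ← Int.cast_mul, ← Int.cast_abs] at hsign
  simpa only [ofReal_mul, ofReal_pow, ofReal_intCast, Int.cast_pow] using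
    congrArg ofReal hsign

/-- The index set of the sum defining `Jn n i`, as quadruples `(a, b, c, d)`. -/
def jnIndex (n i : ℕ) : Set (ℤ × ℤ × ℤ × ℤ) :=
  {p | p.1 * p.2.2.2 - p.2.1 * p.2.2.1 = 1 ∧ p.1 ≠ 0 ∧ p.2.2.1 ≠ 0 ∧
    |p.1| ≤ 2 * (n : ℤ) ∧ |p.2.1| ≤ 2 * (n : ℤ) ∧
    |p.2.2.1| ≤ 2 * (n : ℤ) ∧ |p.2.2.2| ≤ 2 * (n : ℤ) ∧
    ((i : ℚ) / n + p.2.1 / p.1) * ((i : ℚ) / n + p.2.2.2 / p.2.2.1) < 0}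

/-- The product `(a b; c d) * (1 i; 0 n)`, in the encoding of `straddlingMatrices`. -/
def mulCosetRep (n i : ℕ) (p : ℤ × ℤ × ℤ × ℤ) : (ℤ × ℤ) × ℤ × ℤ :=
  ((p.1, p.2.2.1 * i + p.2.2.2 * n), (p.2.2.1, p.1 * i + p.2.1 * n))

theorem div_add_div_mul_neg_iff {n i : ℕ} (hn : 0 < n) {a b c d : ℤ} (ha : a ≠ 0) (hc : c ≠ 0) :
    ((i : ℚ) / n + b / a) * ((i : ℚ) / n + d / c) < 0 ↔
      (a * (c * i + d * n)) * (c * (a * i + b * n)) < 0 := by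
  have hn' : (n : ℚ) ≠ 0 := by positivity
  have ha' : (a : ℚ) ≠ 0 := mod_cast ha
  have hc' : (c : ℚ) ≠ 0 := mod_cast hc
  have hclear : ((i : ℚ) / n + b / a) * ((i : ℚ) / n + d / c) =
      ((a * (c * i + d * n)) * (c * (a * i + b * n)) : ℤ) / (n * a * c) ^ 2 := by
    push_cast
    field_simp
  rw [hclear, div_lt_iff₀ (by positivity), zero_mul, Int.cast_lt_zero]

theorem mem_jnIndex_iff {n i : ℕ} (hn : 0 < n) {a b c d : ℤ} :
    (a, b, c, d) ∈ jnIndex n i ↔ a * d - b * c = 1 ∧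
      (|a| ≤ 2 * (n : ℤ) ∧ |b| ≤ 2 * (n : ℤ) ∧ |c| ≤ 2 * (n : ℤ) ∧ |d| ≤ 2 * (n : ℤ)) ∧
      mulCosetRep n i (a, b, c, d) ∈ straddlingMatrices n := by
  rw [mulCosetRep, mem_straddlingMatrices]
  constructor
  · rintro ⟨hdet, ha, hc, hba, hbb, hbc, hbd, hneg⟩
    have hdetn : a * (c * i + d * n) - c * (a * i + b * n) = n := by
      linear_combination (n : ℤ) * hdet
    rw [div_add_div_mul_neg_iff hn ha hc] at hneg
    refine ⟨hdet, ⟨hba, hbb, hbc, hbd⟩, ?_⟩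
    obtain ⟨hay, hcx⟩ | ⟨hay, hcx⟩ := mul_neg_iff.mp hneg
    · exact ⟨hay, hcx, hdetn⟩
    · linarith [Int.natCast_nonneg n]
  · rintro ⟨hdet, ⟨hba, hbb, hbc, hbd⟩, hay, hcx, -⟩
    have ha := left_ne_zero_of_mul hay.ne'
    have hc := left_ne_zero_of_mul hcx.ne
    exact ⟨hdet, ha, hc, hba, hbb, hbc, hbd,
      (div_add_div_mul_neg_iff hn ha hc).mpr (mul_neg_of_pos_of_neg hay hcx)⟩

/-- The part of `straddlingMatrices n` lying in the coset `SL(2,ℤ) * (1 i; 0 n)`. The congruences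
say that multiplying by `(1 i; 0 n)⁻¹` on the right gives an integer matrix. -/
noncomputable def cosetMatrices (n i : ℕ) : Finset ((ℤ × ℤ) × ℤ × ℤ) :=
  {M ∈ straddlingMatrices n | (M.2.2 : ZMod n) = M.1.1 * i ∧ (M.1.2 : ZMod n) = M.2.1 * i}

theorem abs_le_two_mul_of_eq_add {n i : ℕ} (hi : i < n) {r s t : ℤ} (hs : |s| < n) (ht : |t| < n)
    (h : s = t * i + r * n) : |r| ≤ 2 * (n : ℤ) := by
  have hn' : (0 : ℤ) < n := mod_cast hi.pos
  have hi' : (i : ℤ) ≤ n := mod_cast hi.le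
  refine le_of_mul_le_mul_right ?_ hn'
  calc |r| * n = |s - t * i| := by rw [h, add_sub_cancel_left, abs_mul, Nat.abs_cast]
    _ ≤ |s| + |t| * i := by simpa only [abs_mul, Nat.abs_cast] using abs_sub s (t * i)
    _ ≤ n + n * n := by gcongr
    _ ≤ 2 * n * n := by nlinarith

theorem exists_eq_mul_add_of_intCast_eq {n i : ℕ} {s t : ℤ} (h : (s : ZMod n) = t * i) :
    ∃ r : ℤ, s = t * i + r * n := by
  obtain ⟨r, hr⟩ := (ZMod.intCast_eq_intCast_iff_dvd_sub (t * i) s n).mp (mod_cast h.symm)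
  exact ⟨r, by linear_combination hr⟩

theorem bijOn_mulCosetRep {n i : ℕ} (hi : i < n) :
    Set.BijOn (mulCosetRep n i) (jnIndex n i) (cosetMatrices n i) := by
  have hn := hi.pos
  have hn' : (n : ℤ) ≠ 0 := mod_cast hn.ne'
  refine ⟨?_, ?_, ?_⟩
  · rintro ⟨a, b, c, d⟩ hp
    refine Finset.mem_filter.mpr ⟨((mem_jnIndex_iff hn).mp hp).2.2, ?_⟩
    simp [mulCosetRep]
  · rintro ⟨a, b, c, d⟩ - ⟨a', b', c', d'⟩ - h
    simp only [mulCosetRep, Prod.mk.injEq] at h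
    obtain ⟨⟨rfl, hy⟩, rfl, hx⟩ := h
    rw [mul_right_cancel₀ hn' (add_left_cancel hx), mul_right_cancel₀ hn' (add_left_cancel hy)]
  · rintro ⟨⟨a, y⟩, c, x⟩ hM
    obtain ⟨hM, hx, hy⟩ := Finset.mem_filter.mp hM
    dsimp only at hx hy
    obtain ⟨b, rfl⟩ := exists_eq_mul_add_of_intCast_eq hx
    obtain ⟨d, rfl⟩ := exists_eq_mul_add_of_intCast_eq hy
    obtain ⟨ha, hy', hc, hx'⟩ := abs_lt_of_mem_straddlingMatrices hM
    refine ⟨(a, b, c, d), (mem_jnIndex_iff hn).mpr ⟨?_, ⟨?_, ?_, ?_, ?_⟩, hM⟩, rfl⟩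
    · refine mul_left_cancel₀ hn' ?_
      linear_combination (mem_straddlingMatrices.mp hM).2.2
    · linarith
    · exact abs_le_two_mul_of_eq_add hi hx' ha rfl
    · linarith
    · exact abs_le_two_mul_of_eq_add hi hy' hc rfl

theorem Jn_eq_sum_cosetMatrices {n i : ℕ} (hi : i < n) :
    Jn n i = 1 / 2 * (∑ M ∈ cosetMatrices n i, |M.2.2 * M.1.2| ^ 5 : ℤ) := by
  have hJn : Jn n i = 1 / 2 * ∑ᶠ p ∈ jnIndex n i,
      (Real.sign ((i : ℝ) / n + (p.2.1 : ℝ) / p.1) : ℂ) *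
        ((p.1 * i + p.2.1 * n : ℤ) : ℂ) ^ 5 * ((p.2.2.1 * i + p.2.2.2 * n : ℤ) : ℂ) ^ 5 :=
    congrArg _ (finsum_congr fun p => finsum_eq_if.symm)
  rw [hJn, Int.cast_sum, ← finsum_mem_coe_finset]
  congr 1
  exact finsum_mem_eq_of_bijOn _ (bijOn_mulCosetRep hi) fun p hp =>
    sign_div_add_div_mul_pow_mul_pow (by decide) hi.pos
      (mem_straddlingMatrices.mp ((mem_jnIndex_iff hi.pos).mp hp).2.2).1

theorem cosetMatrices_eq_filter {n : ℕ} [Fact n.Prime] {i : ℕ} (hi : i < n) :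
    cosetMatrices n i = {M ∈ straddlingMatrices n | ((M.2.2 : ZMod n) / M.1.1).val = i} := by
  refine Finset.filter_congr ?_
  rintro ⟨⟨a, y⟩, c, x⟩ hM
  have ha : (a : ZMod n) ≠ 0 := by
    obtain ⟨hay, -⟩ := mem_straddlingMatrices.mp hM
    rw [Ne, ZMod.intCast_zmod_eq_zero_iff_dvd]
    exact fun hdvd => left_ne_zero_of_mul hay.ne'
      (Int.eq_zero_of_abs_lt_dvd hdvd (abs_lt_of_mem_straddlingMatrices hM).1)
  have hdet : (a * y : ZMod n) = c * x := by
    have h := congrArg ((↑) : ℤ → ZMod n) (mem_straddlingMatrices.mp hM).2.2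
    push_cast at h
    rwa [ZMod.natCast_self, sub_eq_zero] at h
  have hval : ((x : ZMod n) / a).val = i ↔ (x : ZMod n) = a * i := by
    rw [mul_comm, ← div_eq_iff ha]
    constructor
    · rintro rfl
      rw [ZMod.natCast_zmod_val]
    · intro h
      rw [h, ZMod.val_natCast_of_lt hi]
  rw [hval, and_iff_left_iff_imp]
  intro hx
  refine mul_left_cancel₀ ha ?_
  rw [hdet, hx]
  ring

theorem sum_Jn {n : ℕ} (hn : n.Prime) : ∑ i ∈ Finset.range n, Jn n i =
    2 * ∑ p ∈ Finset.HasAntidiagonal.antidiagonal n, (sigma 5 p.1 * sigma 5 p.2 : ℂ) := by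
  have : Fact n.Prime := ⟨hn⟩
  have hmaps : ∀ M ∈ straddlingMatrices n, ((M.2.2 : ZMod n) / M.1.1).val ∈ Finset.range n :=
    fun M _ => Finset.mem_range.mpr (ZMod.val_lt _)
  calc ∑ i ∈ Finset.range n, Jn n i
      = ∑ i ∈ Finset.range n, (1 / 2 : ℂ) * (∑ M ∈ straddlingMatrices n with
          ((M.2.2 : ZMod n) / M.1.1).val = i, |M.2.2 * M.1.2| ^ 5 : ℤ) := by
        refine Finset.sum_congr rfl fun i hi => ?_
        have hin := Finset.mem_range.mp hi
        rw [Jn_eq_sum_cosetMatrices hin, cosetMatrices_eq_filter hin]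
    _ = 1 / 2 * (∑ M ∈ straddlingMatrices n, |M.2.2 * M.1.2| ^ 5 : ℤ) := by
        rw [← Finset.mul_sum, ← Int.cast_sum, Finset.sum_fiberwise_of_maps_to hmaps]
    _ = 2 * ∑ p ∈ Finset.HasAntidiagonal.antidiagonal n, (sigma 5 p.1 * sigma 5 p.2 : ℂ) := by
        rw [sum_straddlingMatrices]
        push_cast
        ring

end StraddlingMatrices

/-- Fukuhara's elementary formula for Ramanujan's tau function at a prime `n`,
where `τ` is characterized by `∑ τ(m)·q^m = q·∏ (1−q^m)^24`, `q = e^{2πiz}`. -/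
theorem tau_formula (τ : ℕ → ℂ)
    (hτ : ∀ z : ℍ,
      ∑' m : ℕ, τ (m + 1) * Complex.exp (2 * π * Complex.I * (m + 1) * z)
        = Complex.exp (2 * π * Complex.I * z)
          * ∏' m : ℕ, (1 - Complex.exp (2 * π * Complex.I * (m + 1) * z)) ^ 24)
    (n : ℕ) (hn : n.Prime) :
    τ n = 1 + (n : ℂ) ^ 11 + (691 / 756) * ((n : ℂ) ^ 5 - (n : ℂ) ^ 11)
      - (691 / 6) * ∑ i ∈ Finset.range n, Jn n i := by
  have hσ (k : ℕ) : (ArithmeticFunction.sigma k n : ℂ) = 1 + (n : ℂ) ^ k := by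
    rw [ArithmeticFunction.sigma_apply, hn.sum_divisors]
    push_cast
    ring
  have hcoeff := coeff_qExpansion_discriminant_of_hasSum
    (hasSum_discriminant_of_tsum_eq hτ) hn.ne_zero
  rw [← hcoeff, coeff_qExpansion_discriminant, sum_Jn hn, hσ, hσ]
  ring
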